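/- The rule of generalization gen (the scheme with single hypothesis φ, conclusion ∀x φ, and no DV conditions) is not provable from the set of axiom schemes TMM ∖ {gen}. -/

import Mathlib

set_option autoImplicit false

/-! ## Megill-style scheme-level formalization of first-order logic -/

/-- Metavariables: variable metavariables `vr i` (standing for x_i) and
formula metavariables `fm i` (standing for φ_i). -/
inductive MV : Type
  | vr (i : ℕ) : MV
  | fm (i : ℕ) : MV
  deriving DecidableEq

/-- Metaformulas over the pure language of equality. -/
inductive MF : Type
  | phi (i : ℕ) : MF
  | eq (i j : ℕ) : MF
  | imp (a b : MF) : MF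
  | not (a : MF) : MF
  | all (i : ℕ) (a : MF) : MF
  deriving DecidableEq

/-- The set of metavariables occurring in a metaformula. -/
def MF.OC : MF → Set MV
  | .phi i => {MV.fm i}
  | .eq i j => {MV.vr i, MV.vr j}
  | .imp a b => a.OC ∪ b.OC
  | .not a => a.OC
  | .all i a => insert (MV.vr i) a.OC

/-- A scheme: finitely many hypotheses, a conclusion, and disjoint-variable
(DV) conditions given as unordered pairs of metavariables. -/
structure Scheme : Type where
  hyps : Finset MF
  concl : MF
  dv : Set (Sym2 MV)

/-- Metavariables occurring in a scheme (in its hypotheses or conclusion). -/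
def Scheme.OC (Φ : Scheme) : Set MV :=
  {m | ∃ h ∈ Φ.hyps, m ∈ h.OC} ∪ Φ.concl.OC

/-- A (type-preserving) substitution: variable metavariables go to variable
metavariables, formula metavariables go to metaformulas; it is the identity
outside a finite set. -/
structure Subst : Type where
  vr : ℕ → ℕ
  fm : ℕ → MF
  finVr : {i : ℕ | vr i ≠ i}.Finite
  finFm : {i : ℕ | fm i ≠ MF.phi i}.Finite

/-- Action of a substitution on a metaformula. -/
def MF.substMF (σ : Subst) : MF → MF
  | .phi i => σ.fm i
  | .eq i j => .eq (σ.vr i) (σ.vr j)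
  | .imp a b => .imp (a.substMF σ) (b.substMF σ)
  | .not a => .not (a.substMF σ)
  | .all i a => .all (σ.vr i) (a.substMF σ)

/-- The set of metavariables occurring in the image of a metavariable. -/
def Subst.appMV (σ : Subst) : MV → Set MV
  | .vr i => {MV.vr (σ.vr i)}
  | .fm i => (σ.fm i).OC

/-- σ is the identity on a given metavariable. -/
def Subst.Fixes (σ : Subst) : MV → Prop
  | .vr i => σ.vr i = i
  | .fm i => σ.fm i = MF.phi i

/-- A substitution is legitimate on a scheme if it does not violate its
DV conditions. -/
def Subst.Legit (σ : Subst) (Φ : Scheme) : Prop :=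
  ∀ m n : MV, s(m, n) ∈ Φ.dv → σ.appMV m ∩ σ.appMV n = ∅

/-- Propagation of DV conditions along a substitution. -/
def Subst.dvMap (σ : Subst) (D : Set (Sym2 MV)) : Set (Sym2 MV) :=
  {q | ∃ m' n' m n : MV, s(m', n') ∈ D ∧ m ∈ σ.appMV m' ∧ n ∈ σ.appMV n' ∧ q = s(m, n)}

/-- Action of a substitution on a scheme. -/
def Scheme.substS (Φ : Scheme) (σ : Subst) : Scheme :=
  ⟨Φ.hyps.image (MF.substMF σ), Φ.concl.substMF σ, σ.dvMap Φ.dv⟩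

/-- `Φ.Inst Ψ` : Ψ is an instance of Φ, i.e. the result of a legitimate
substitution, possibly followed by the addition of DV conditions. -/
def Scheme.Inst (Φ Ψ : Scheme) : Prop :=
  ∃ σ : Subst, σ.Legit Φ ∧ Ψ.hyps = Φ.hyps.image (MF.substMF σ) ∧
    Ψ.concl = Φ.concl.substMF σ ∧ σ.dvMap Φ.dv ⊆ Ψ.dv

/-- Metavariables occurring in a list of metaformulas. -/
def listOC (P : List MF) : Set MV := {m | ∃ f ∈ P, m ∈ f.OC}

/-- The DV conditions of a proof `P` of the scheme `Φ`: those of `Φ`, plus all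
pairs {m, n} where m is a dummy metavariable of `P` and n occurs in `P`. -/
def proofDV (Φ : Scheme) (P : List MF) : Set (Sym2 MV) :=
  Φ.dv ∪ {q | ∃ m n : MV, m ∈ listOC P ∧ m ∉ Φ.OC ∧ n ∈ listOC P ∧ q = s(m, n)}

/-- `P` is a proof of the scheme `Φ` from the set `S` of schemes. -/
def IsProof (S : Set Scheme) (Φ : Scheme) (P : List MF) : Prop :=
  P ≠ [] ∧ P.getLast? = some Φ.concl ∧
  ∀ (k : ℕ) (hk : k < P.length),
    P.get ⟨k, hk⟩ ∈ Φ.hyps ∨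
    ∃ hs : Finset MF,
      (∀ h ∈ hs, ∃ (l : ℕ) (hl : l < k), P.get ⟨l, hl.trans hk⟩ = h) ∧
      ∃ Ξ ∈ S, Ξ.Inst ⟨hs, P.get ⟨k, hk⟩, proofDV Φ P⟩

/-- `S ⊢ Φ` : the scheme `Φ` is provable from the set `S` of schemes. -/
def Provable (S : Set Scheme) (Φ : Scheme) : Prop := ∃ P : List MF, IsProof S Φ P

/-! ## Object level: first-order formulas and semantics -/

/-- First-order formulas over the pure language of equality, with
individual variables v_i. -/
inductive FM : Type
  | eq (i j : ℕ) : FM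
  | imp (a b : FM) : FM
  | not (a : FM) : FM
  | all (i : ℕ) (a : FM) : FM
  deriving DecidableEq

/-- Variables occurring in a first-order formula. -/
def FM.vars : FM → Set ℕ
  | .eq i j => {i, j}
  | .imp a b => a.vars ∪ b.vars
  | .not a => a.vars
  | .all i a => insert i a.vars

/-- An object-substitution: variable metavariables go to individual variables,
formula metavariables go to first-order formulas. -/
structure OSubst : Type where
  vr : ℕ → ℕ
  fm : ℕ → FM

/-- Action of an object-substitution on a metaformula, yielding a first-order
formula (an object-instance). -/
def MF.osubst (τ : OSubst) : MF → FM
  | .phi i => τ.fm i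
  | .eq i j => .eq (τ.vr i) (τ.vr j)
  | .imp a b => .imp (a.osubst τ) (b.osubst τ)
  | .not a => .not (a.osubst τ)
  | .all i a => .all (τ.vr i) (a.osubst τ)

/-- Variables occurring in the image of a metavariable. -/
def OSubst.appVars (τ : OSubst) : MV → Set ℕ
  | .vr i => {τ.vr i}
  | .fm i => (τ.fm i).vars

/-- An object-substitution is legitimate on a scheme if images of DV-paired
metavariables share no variables. -/
def OSubst.Legit (τ : OSubst) (Φ : Scheme) : Prop :=
  ∀ m n : MV, s(m, n) ∈ Φ.dv → τ.appVars m ∩ τ.appVars n = ∅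

/-- Evaluation of a first-order formula in a structure with domain `D`
(equality interpreted as equality) under an assignment `ρ`. -/
def FM.eval {D : Type} (ρ : ℕ → D) : FM → Prop
  | .eq i j => ρ i = ρ j
  | .imp a b => a.eval ρ → b.eval ρ
  | .not a => ¬ a.eval ρ
  | .all i a => ∀ d : D, a.eval (Function.update ρ i d)

/-- Validity of a first-order formula in the structure with domain `D`. -/
def FM.Valid (D : Type) (f : FM) : Prop := ∀ ρ : ℕ → D, f.eval ρ

/-- A scheme is true if for every legitimate object-instance and every
nonempty domain, the conclusion is valid whenever all hypotheses are. -/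
def Scheme.IsTrue (Φ : Scheme) : Prop :=
  ∀ τ : OSubst, τ.Legit Φ →
    ∀ D : Type, Nonempty D →
      (∀ h ∈ Φ.hyps, FM.Valid D (h.osubst τ)) → FM.Valid D (Φ.concl.osubst τ)

/-! ## (i,j)-transforms and supertruth -/

/-- Auxiliary: (i,j)-transform with a flag recording whether we are inside the
scope of a quantifier ∀x_i. -/
def MF.transfAux (i j : ℕ) : MF → Bool → MF
  | .phi k, _ => .phi k
  | .eq a b, ins =>
      .eq (if ins = true ∧ a = j then i else a) (if ins = true ∧ b = j then i else b)
  | .imp a b, ins => .imp (a.transfAux i j ins) (b.transfAux i j ins)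
  | .not a, ins => .not (a.transfAux i j ins)
  | .all k a, ins =>
      .all (if ins = true ∧ k = j then i else k) (a.transfAux i j (ins || decide (k = i)))

/-- The (i,j)-transform of a metaformula: replace every occurrence of x_j
lying within the scope of a quantifier ∀x_i by x_i. -/
def MF.transform (i j : ℕ) (f : MF) : MF := f.transfAux i j false

/-- The (i,j)-transform of a scheme: transform hypotheses and conclusion,
keep the DV conditions. -/
def Scheme.transform (i j : ℕ) (Φ : Scheme) : Scheme :=
  ⟨Φ.hyps.image (MF.transform i j), Φ.concl.transform i j, Φ.dv⟩

/-- The (i,j)-transform (and the {i,j}-transform) is legitimate on a scheme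
if {x_i, x_j} is not among its DV conditions. -/
def Scheme.TLegit (i j : ℕ) (Φ : Scheme) : Prop := s(MV.vr i, MV.vr j) ∉ Φ.dv

/-- A (hypothesis-free) scheme is presupertrue if all the legitimate
(i,j)-transforms of all its instances (including itself) are true. -/
def Scheme.PreST (Φ : Scheme) : Prop :=
  ∀ Ψ : Scheme, (Ψ = Φ ∨ Φ.Inst Ψ) → ∀ i j : ℕ, Ψ.TLegit i j → (Ψ.transform i j).IsTrue

/-- A scheme is supertrue if every instance of it (including itself) satisfies:
whenever all legitimate (i,j)-transforms of all instances of each of its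
hypotheses (taken as hypothesis-free schemes with the inherited DV conditions)
are true, all legitimate (i,j)-transforms of all instances of its conclusion
are true. -/
def Scheme.Supertrue (Φ : Scheme) : Prop :=
  ∀ Ψ : Scheme, (Ψ = Φ ∨ Φ.Inst Ψ) →
    (∀ h ∈ Ψ.hyps, Scheme.PreST ⟨∅, h, Ψ.dv⟩) → Scheme.PreST ⟨∅, Ψ.concl, Ψ.dv⟩

/-- The {i,j}-transform of a metaformula: the composite of the (i,j)-transform
and the (j,i)-transform, the one with smaller first index performed first. -/
def MF.stransform (i j : ℕ) (f : MF) : MF :=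
  if i ≤ j then (f.transform i j).transform j i else (f.transform j i).transform i j

/-- The {i,j}-transform of a scheme. -/
def Scheme.stransform (i j : ℕ) (Φ : Scheme) : Scheme :=
  ⟨Φ.hyps.image (MF.stransform i j), Φ.concl.stransform i j, Φ.dv⟩

/-- A metaformula contains no formula metavariables. -/
def MF.FmFree : MF → Prop
  | .phi _ => False
  | .eq _ _ => True
  | .imp a b => a.FmFree ∧ b.FmFree
  | .not a => a.FmFree
  | .all _ a => a.FmFree

/-- A scheme contains no formula metavariables. -/
def Scheme.FmFree (Φ : Scheme) : Prop := (∀ h ∈ Φ.hyps, h.FmFree) ∧ Φ.concl.FmFree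

/-- A (hypothesis-free) scheme is pre-semisupertrue if all the legitimate
{i,j}-transforms of all its instances (including itself) are true. -/
def Scheme.PreSST (Φ : Scheme) : Prop :=
  ∀ Ψ : Scheme, (Ψ = Φ ∨ Φ.Inst Ψ) → ∀ i j : ℕ, Ψ.TLegit i j → (Ψ.stransform i j).IsTrue

/-- A scheme is semisupertrue if it is true and every formula-metavariable-free
instance of it satisfies: whenever all legitimate {i,j}-transforms of all
instances of each of its hypotheses are true, all legitimate {i,j}-transforms
of all instances of its conclusion are true. -/
def Scheme.Semisupertrue (Φ : Scheme) : Prop :=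
  Φ.IsTrue ∧
  ∀ Ψ : Scheme, (Ψ = Φ ∨ Φ.Inst Ψ) → Ψ.FmFree →
    (∀ h ∈ Ψ.hyps, Scheme.PreSST ⟨∅, h, Ψ.dv⟩) → Scheme.PreSST ⟨∅, Ψ.concl, Ψ.dv⟩

/-- A metaformula is quantifier-free. -/
def MF.QFree : MF → Prop
  | .phi _ => True
  | .eq _ _ => True
  | .imp a b => a.QFree ∧ b.QFree
  | .not a => a.QFree
  | .all _ _ => False

/-- A scheme is quantifier-free. -/
def Scheme.QFree (Φ : Scheme) : Prop := (∀ h ∈ Φ.hyps, h.QFree) ∧ Φ.concl.QFree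

/-! ## The axiom schemes of the system TMM
(x = x_0, y = x_1, z = x_2; φ = φ_0, ψ = φ_1, χ = φ_2, θ = φ_3, τ = φ_4) -/

def ax_mp : Scheme := ⟨{.phi 0, .imp (.phi 0) (.phi 1)}, .phi 1, ∅⟩

def ax_minimp : Scheme :=
  ⟨∅, .imp (.phi 0) (.imp (.imp (.phi 1) (.phi 2))
      (.imp (.imp (.imp (.phi 3) (.phi 1)) (.imp (.phi 2) (.phi 4)))
        (.imp (.phi 1) (.phi 4)))), ∅⟩

def ax_peirce : Scheme := ⟨∅, .imp (.imp (.imp (.phi 0) (.phi 1)) (.phi 0)) (.phi 0), ∅⟩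

def ax_contrap : Scheme :=
  ⟨∅, .imp (.imp (.phi 0) (.not (.phi 1))) (.imp (.phi 1) (.not (.phi 0))), ∅⟩

def ax_notelim : Scheme := ⟨∅, .imp (.not (.phi 0)) (.imp (.phi 0) (.phi 1)), ∅⟩

def ax_gen : Scheme := ⟨{.phi 0}, .all 0 (.phi 0), ∅⟩

def ax_ALLdistr : Scheme :=
  ⟨∅, .imp (.all 0 (.imp (.phi 0) (.phi 1))) (.imp (.all 0 (.phi 0)) (.all 0 (.phi 1))), ∅⟩

def ax_spec : Scheme := ⟨∅, .imp (.all 0 (.phi 0)) (.phi 0), ∅⟩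

def ax_modal5 : Scheme :=
  ⟨∅, .imp (.not (.all 0 (.phi 0))) (.all 0 (.not (.all 0 (.phi 0)))), ∅⟩

def ax_vacGen : Scheme := ⟨∅, .imp (.phi 0) (.all 0 (.phi 0)), {s(MV.vr 0, MV.fm 0)}⟩

def ax_ALLcomm : Scheme :=
  ⟨∅, .imp (.all 0 (.all 1 (.phi 0))) (.all 1 (.all 0 (.phi 0))), ∅⟩

def ax_EQrefl : Scheme := ⟨∅, .eq 0 0, ∅⟩

def ax_EQsymm : Scheme := ⟨∅, .imp (.eq 0 1) (.eq 1 0), ∅⟩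

def ax_EQtrans : Scheme := ⟨∅, .imp (.eq 0 1) (.imp (.eq 1 2) (.eq 0 2)), ∅⟩

def ax_denot : Scheme :=
  ⟨∅, .imp (.eq 0 0) (.not (.all 1 (.not (.eq 1 0)))), {s(MV.vr 0, MV.vr 1)}⟩

def ax_subst : Scheme :=
  ⟨∅, .all 0 (.imp (.eq 0 1) (.imp (.phi 0) (.all 0 (.imp (.eq 0 1) (.phi 0))))),
    {s(MV.vr 0, MV.vr 1), s(MV.vr 1, MV.fm 0)}⟩

def ax_ALLeq : Scheme :=
  ⟨∅, .imp (.all 0 (.eq 0 1)) (.imp (.all 0 (.phi 0)) (.all 1 (.phi 0))), ∅⟩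

def ax_genEq : Scheme :=
  ⟨∅, .imp (.not (.all 0 (.eq 0 1)))
      (.imp (.not (.all 0 (.eq 0 2))) (.imp (.eq 1 2) (.all 0 (.eq 1 2)))), ∅⟩

def ax_modalD : Scheme := ⟨∅, .imp (.all 0 (.not (.phi 0))) (.not (.all 0 (.phi 0))), ∅⟩

def ax_modal4 : Scheme := ⟨∅, .imp (.all 0 (.phi 0)) (.all 0 (.all 0 (.phi 0))), ∅⟩

/-- The system TMM. -/
def TMM : Set Scheme :=
  {ax_mp, ax_minimp, ax_peirce, ax_contrap, ax_notelim, ax_gen, ax_ALLdistr, ax_spec,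
   ax_modal5, ax_vacGen, ax_ALLcomm, ax_EQrefl, ax_EQsymm, ax_EQtrans, ax_denot,
   ax_subst, ax_ALLeq, ax_genEq}

/-- The subsystem T. -/
def Tsys : Set Scheme :=
  {ax_mp, ax_minimp, ax_peirce, ax_contrap, ax_notelim, ax_gen, ax_ALLdistr, ax_vacGen,
   ax_EQrefl, ax_EQsymm, ax_EQtrans, ax_denot}

/-- Two-element model; `φ_0` is read as x_0 is true, other formula metavariables as false. -/
def MF.ev : MF → (ℕ → Bool) → Prop
  | .phi i, ρ => i = 0 ∧ ρ 0 = true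
  | .eq i j, ρ => ρ i = ρ j
  | .imp a b, ρ => a.ev ρ → b.ev ρ
  | .not a, ρ => ¬ a.ev ρ
  | .all i a, ρ => ∀ d : Bool, a.ev (Function.update ρ i d)

/-- Evaluation does not depend on variables that do not occur. -/
theorem MF.ev_update (i : ℕ) (d : Bool) (a : MF) (h1 : MV.vr i ∉ a.OC)
    (h2 : i = 0 → MV.fm 0 ∉ a.OC) :
    ∀ ρ : ℕ → Bool, a.ev (Function.update ρ i d) ↔ a.ev ρ := by
  induction a with
  | phi k =>
    intro ρ
    simp only [MF.ev]
    by_cases hk : k = 0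
    · subst hk
      have : (0 : ℕ) ≠ i := by
        intro h
        exact h2 h.symm (by simp [MF.OC])
      simp [Function.update_of_ne this]
    · simp [hk]
  | eq k l =>
    intro ρ
    simp only [MF.OC, Set.mem_insert_iff, Set.mem_singleton_iff, MV.vr.injEq, not_or] at h1
    simp only [MF.ev]
    rw [Function.update_of_ne (Ne.symm h1.1), Function.update_of_ne (Ne.symm h1.2)]
  | imp a b iha ihb =>
    intro ρ
    simp only [MF.OC, Set.mem_union, not_or] at h1 h2
    simp only [MF.ev]
    rw [iha h1.1 (fun h => (h2 h).1), ihb h1.2 (fun h => (h2 h).2)]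
  | not a iha =>
    intro ρ
    simp only [MF.ev]
    rw [iha h1 h2]
  | all k a iha =>
    intro ρ
    simp only [MF.OC, Set.mem_insert_iff, not_or, MV.vr.injEq] at h1 h2
    simp only [MF.ev]
    refine forall_congr' fun e => ?_
    rw [Function.update_comm h1.1]
    exact iha h1.2 (fun h => (h2 h).2) _

theorem not_mem_proofDV (P : List MF) : s(MV.vr 0, MV.fm 0) ∉ proofDV ax_gen P := by
  rintro (h | ⟨m, n, -, h, -, hq⟩)
  · exact h
  · apply h
    rcases Sym2.eq_iff.1 hq with ⟨rfl, rfl⟩ | ⟨rfl, rfl⟩ <;>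
      simp [Scheme.OC, ax_gen, MF.OC]

/-- Every instance of an axiom other than gen preserves truth at a given assignment. -/
theorem tmm_sound (P : List MF) (Ξ : Scheme) (hΞ : Ξ ∈ TMM \ {ax_gen}) (hs : Finset MF)
    (c : MF) (hI : Ξ.Inst ⟨hs, c, proofDV ax_gen P⟩) (ρ : ℕ → Bool)
    (hh : ∀ h ∈ hs, h.ev ρ) : c.ev ρ := by
  obtain ⟨σ, hL, hhyp, hc, hdv⟩ := hI
  dsimp only at hhyp hc hdv
  subst hc
  obtain ⟨hT, hg⟩ := hΞ
  simp only [TMM, Set.mem_insert_iff, Set.mem_singleton_iff] at hT hg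
  rcases hT with rfl | rfl | rfl | rfl | rfl | rfl | rfl | rfl | rfl | rfl | rfl | rfl | rfl |
    rfl | rfl | rfl | rfl | rfl
  · skip
    have h1 := hh (σ.fm 0) (by rw [hhyp]; simp [ax_mp, MF.substMF])
    have h2 := hh (.imp (σ.fm 0) (σ.fm 1)) (by rw [hhyp]; simp [ax_mp, MF.substMF])
    exact h2 h1
  · simp only [ax_minimp, MF.substMF, MF.ev]
    tauto
  · simp only [ax_peirce, MF.substMF, MF.ev]
    tauto
  · simp only [ax_contrap, MF.substMF, MF.ev]
    tauto
  · simp only [ax_notelim, MF.substMF, MF.ev]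
    tauto
  · exact absurd rfl hg
  · simp only [ax_ALLdistr, MF.substMF, MF.ev]
    exact fun h1 h2 d => h1 d (h2 d)
  · simp only [ax_spec, MF.substMF, MF.ev]
    intro h
    simpa using h (ρ (σ.vr 0))
  · simp only [ax_modal5, MF.substMF, MF.ev]
    intro h d hd
    exact h (by simpa using hd)
  · skip
    simp only [ax_vacGen, MF.substMF, MF.ev]
    intro h d
    refine (MF.ev_update _ d _ ?_ ?_ ρ).2 h
    · intro hm
      have := hL (MV.vr 0) (MV.fm 0) (by simp [ax_vacGen])
      have hx : MV.vr (σ.vr 0) ∈ σ.appMV (MV.vr 0) ∩ σ.appMV (MV.fm 0) :=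
        ⟨by simp [Subst.appMV], hm⟩
      rw [this] at hx
      exact hx
    · intro h0 hm
      refine not_mem_proofDV P (hdv ⟨MV.vr 0, MV.fm 0, MV.vr 0, MV.fm 0, ?_, ?_, hm, rfl⟩)
      · simp [ax_vacGen]
      · simp [Subst.appMV, h0]
  · skip
    simp only [ax_ALLcomm, MF.substMF, MF.ev]
    intro h d e
    by_cases hxy : σ.vr 0 = σ.vr 1
    · have := h d e
      rw [hxy] at this ⊢
      exact this
    · rw [Function.update_comm (Ne.symm hxy)]
      exact h e d
  · simp only [ax_EQrefl, MF.substMF, MF.ev]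
  · simp only [ax_EQsymm, MF.substMF, MF.ev]
    exact Eq.symm
  · simp only [ax_EQtrans, MF.substMF, MF.ev]
    exact Eq.trans
  · skip
    have := hL (MV.vr 0) (MV.vr 1) (by simp [ax_denot])
    have hxy : σ.vr 0 ≠ σ.vr 1 := by
      intro h
      simp [Subst.appMV, h] at this
    simp only [ax_denot, MF.substMF, MF.ev]
    intro _ h
    apply h (ρ (σ.vr 0))
    simp [Function.update_of_ne hxy]
  · skip
    have := hL (MV.vr 0) (MV.vr 1) (by simp [ax_subst])
    have hxy : σ.vr 1 ≠ σ.vr 0 := by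
      intro h
      simp [Subst.appMV, h] at this
    simp only [ax_subst, MF.substMF, MF.ev]
    intro d hd hφ e he
    simp only [Function.update_self, Function.update_of_ne hxy, Function.update_idem] at hd he ⊢
    rw [he, ← hd]
    exact hφ
  · skip
    simp only [ax_ALLeq, MF.substMF, MF.ev]
    intro h h'
    by_cases hxy : σ.vr 1 = σ.vr 0
    · rw [hxy]
      exact h'
    · have h1 := h (!ρ (σ.vr 1))
      simp [Function.update_of_ne hxy] at h1
  · skip
    simp only [ax_genEq, MF.substMF, MF.ev]
    intro h1 h2 h3 d
    have hy : σ.vr 1 ≠ σ.vr 0 := fun h => h1 (by simp [h])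
    have hz : σ.vr 2 ≠ σ.vr 0 := fun h => h2 (by simp [h])
    rw [Function.update_of_ne hy, Function.update_of_ne hz]
    exact h3

/-- The rule of generalization is not provable from TMM ∖ {gen}. -/
theorem gen_independent : ¬ Provable (TMM \ {ax_gen}) ax_gen := by
  rintro ⟨P, hne, hlast, hP⟩
  have key : ∀ (k : ℕ) (hk : k < P.length), (P.get ⟨k, hk⟩).ev (fun _ => true) := by
    intro k
    induction k using Nat.strong_induction_on with
    | _ k ih =>
      intro hk
      rcases hP k hk with h | ⟨hs, hhs, Ξ, hΞ, hI⟩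
      · simp only [ax_gen, Finset.mem_singleton] at h
        rw [h]
        simp [MF.ev]
      · refine tmm_sound P Ξ hΞ hs _ hI _ ?_
        intro h hh
        obtain ⟨l, hl, rfl⟩ := hhs h hh
        exact ih l hl _
  have hmem : ax_gen.concl ∈ P := List.mem_of_getLast? hlast
  obtain ⟨n, hn⟩ := List.get_of_mem hmem
  have h := key n n.2
  have h' : (ax_gen.concl).ev (fun _ => true) := by
    rw [← hn]
    exact h
  have := h' false
  simp [MF.ev] at this
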